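/- Let P be a nonzero harmonic polynomial on ℝⁿ (n ≥ 2) of degree k ≥ 1. Then for every real number a > −min(1, 2/k) the function x ↦ |P(x)|^a is integrable on the unit ball B₁, i.e. ∫_{B₁} |P(x)|^a dx < ∞. -/

import Mathlib

open MeasureTheory Metric Filter

/-- A polynomial `P ∈ ℝ[x₁,…,xₙ]` is harmonic if `∑ i, ∂²P/∂xᵢ²` is the zero polynomial. -/
def IsHarmonicPoly {n : ℕ} (P : MvPolynomial (Fin n) ℝ) : Prop :=
  ∑ i, MvPolynomial.pderiv i (MvPolynomial.pderiv i P) = 0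

/-- The polynomial function on ℝⁿ associated with `P ∈ ℝ[x₁,…,xₙ]`. -/
noncomputable def polyFun {n : ℕ} (P : MvPolynomial (Fin n) ℝ)
    (x : EuclideanSpace ℝ (Fin n)) : ℝ :=
  MvPolynomial.eval (fun i => x i) P

section GaussPart
open ProbabilityTheory

lemma gauss_pow_integrable (j : ℕ) : Integrable (fun x : ℝ => x ^ j) (gaussianReal 0 1) := by
  have h := (memLp_id_gaussianReal (μ := 0) (v := 1) (j : NNReal)).integrable_norm_pow'
  refine (integrable_norm_iff ?_).1 ?_
  · fun_prop
  · simpa using h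

lemma gauss_pow_integrable' (j : ℕ) :
    Integrable (fun x : ℝ => x ^ j * gaussianPDFReal 0 1 x) := by
  have h := gauss_pow_integrable j
  rw [gaussianReal_of_var_ne_zero _ one_ne_zero,
    integrable_withDensity_iff (measurable_gaussianPDF _ _)
      (ae_of_all _ fun _ => gaussianPDF_lt_top)] at h
  simpa using h

lemma gauss_pdf_deriv (x : ℝ) :
    HasDerivAt (gaussianPDFReal 0 1) (-x * gaussianPDFReal 0 1 x) x := by
  have h : HasDerivAt (fun x : ℝ => -(x ^ 2) / 2) (-x) x := by
    have := ((hasDerivAt_pow 2 x).fun_neg).div_const (2 : ℝ)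
    refine this.congr_deriv ?_
    push_cast
    ring
  have h2 := (h.exp).const_mul ((√(2 * Real.pi))⁻¹)
  have he : gaussianPDFReal 0 1 = fun x => (√(2 * Real.pi))⁻¹ * Real.exp (-(x ^ 2) / 2) := by
    ext y; simp [gaussianPDFReal]
  rw [he]
  refine h2.congr_deriv ?_
  ring

lemma gauss_moment (j : ℕ) : ∫ x, x ^ (j + 1) ∂(gaussianReal 0 1)
    = j * ∫ x, x ^ (j - 1) ∂(gaussianReal 0 1) := by
  rw [integral_gaussianReal_eq_integral_smul one_ne_zero,
    integral_gaussianReal_eq_integral_smul one_ne_zero]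
  have h := integral_mul_deriv_eq_deriv_mul_of_integrable
    (u := fun x : ℝ => x ^ j) (u' := fun x => j * x ^ (j - 1))
    (v := gaussianPDFReal 0 1) (v' := fun x => -x * gaussianPDFReal 0 1 x)
    (fun x _ => by simpa using hasDerivAt_pow j x) (fun x _ => gauss_pdf_deriv x)
    (by
      refine (gauss_pow_integrable' (j + 1)).neg.congr (ae_of_all _ fun x => ?_)
      simp; ring)
    (by
      refine ((gauss_pow_integrable' (j - 1)).const_mul (j : ℝ)).congr (ae_of_all _ fun x => ?_)
      simp; ring)
    (by
      refine ((gauss_pow_integrable' j)).congr (ae_of_all _ fun x => ?_)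
      simp)
  have h1 : ∫ x : ℝ, gaussianPDFReal 0 1 x • x ^ (j + 1) =
      - ∫ x : ℝ, x ^ j * (-x * gaussianPDFReal 0 1 x) := by
    rw [← integral_neg]
    congr 1; ext x; simp; ring
  rw [h1, h, neg_neg, ← integral_const_mul]
  congr 1; ext x; simp; ring

/-- Gaussian expectation of a polynomial. -/
noncomputable def gE {n : ℕ} (p : MvPolynomial (Fin n) ℝ) : ℝ :=
  ∫ x, MvPolynomial.eval x p ∂(Measure.pi fun _ : Fin n => gaussianReal 0 1)

lemma gE_monomial_integrable {n : ℕ} (m : Fin n →₀ ℕ) (c : ℝ) :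
    Integrable (fun x => MvPolynomial.eval x (MvPolynomial.monomial m c))
      (Measure.pi fun _ : Fin n => gaussianReal 0 1) := by
  simp only [MvPolynomial.eval_monomial, Finsupp.prod_pow]
  exact (Integrable.fintype_prod (f := fun i (x : ℝ) => x ^ m i)
    (fun i => gauss_pow_integrable (m i))).const_mul c

lemma gE_integrable {n : ℕ} (p : MvPolynomial (Fin n) ℝ) :
    Integrable (fun x => MvPolynomial.eval x p)
      (Measure.pi fun _ : Fin n => gaussianReal 0 1) := by
  induction p using MvPolynomial.monomial_add_induction_on with
  | C a => simp
  | monomial_add m c f _ _ ih =>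
    simp only [map_add]
    exact (gE_monomial_integrable m c).add ih

lemma gE_add {n : ℕ} (p q : MvPolynomial (Fin n) ℝ) : gE (p + q) = gE p + gE q := by
  unfold gE
  simp only [map_add]
  exact integral_add (gE_integrable p) (gE_integrable q)

lemma gE_C_mul {n : ℕ} (c : ℝ) (q : MvPolynomial (Fin n) ℝ) :
    gE (MvPolynomial.C c * q) = c * gE q := by
  unfold gE
  simp only [map_mul, MvPolynomial.eval_C]
  exact integral_const_mul _ _

lemma gE_zero {n : ℕ} : gE (0 : MvPolynomial (Fin n) ℝ) = 0 := by simp [gE]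

lemma gE_sum {n : ℕ} {ι : Type*} (s : Finset ι) (f : ι → MvPolynomial (Fin n) ℝ) :
    gE (∑ i ∈ s, f i) = ∑ i ∈ s, gE (f i) := by
  classical
  induction s using Finset.induction_on with
  | empty => simp [gE_zero]
  | insert a s ha ih => rw [Finset.sum_insert ha, Finset.sum_insert ha, gE_add, ih]

lemma gE_monomial {n : ℕ} (m : Fin n →₀ ℕ) (c : ℝ) :
    gE (MvPolynomial.monomial m c) = c * ∏ i, ∫ x, x ^ m i ∂(gaussianReal 0 1) := by
  unfold gE
  simp only [MvPolynomial.eval_monomial, Finsupp.prod_pow]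
  rw [integral_const_mul]
  congr 1
  exact integral_fintype_prod_eq_prod (fun i (x : ℝ) => x ^ m i)

lemma gE_stein {n : ℕ} (i : Fin n) (p : MvPolynomial (Fin n) ℝ) :
    gE (MvPolynomial.X i * p) = gE (MvPolynomial.pderiv i p) := by
  have key : ∀ (m : Fin n →₀ ℕ) (c : ℝ), gE (MvPolynomial.X i * MvPolynomial.monomial m c)
      = gE (MvPolynomial.pderiv i (MvPolynomial.monomial m c)) := by
    intro m c
    rw [MvPolynomial.pderiv_monomial, MvPolynomial.X, MvPolynomial.monomial_mul, gE_monomial,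
      gE_monomial, ← Finset.mul_prod_erase Finset.univ _ (Finset.mem_univ i),
      ← Finset.mul_prod_erase Finset.univ (fun j => ∫ x, x ^ (m - Finsupp.single i 1 : Fin n →₀ ℕ) j ∂(gaussianReal 0 1))
        (Finset.mem_univ i)]
    have h : ∀ j ∈ Finset.univ.erase i,
        ∫ x, x ^ (Finsupp.single i 1 + m : Fin n →₀ ℕ) j ∂(gaussianReal 0 1) =
        ∫ x, x ^ (m - Finsupp.single i 1 : Fin n →₀ ℕ) j ∂(gaussianReal 0 1) := by
      intro j hj
      have : i ≠ j := (Finset.ne_of_mem_erase hj).symm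
      simp [this]
    rw [Finset.prod_congr rfl h]
    have h2 : (Finsupp.single i 1 + m : Fin n →₀ ℕ) i = m i + 1 := by simp [add_comm]
    have h3 : (m - Finsupp.single i 1 : Fin n →₀ ℕ) i = m i - 1 := by simp
    rw [h2, h3, gauss_moment]
    ring
  induction p using MvPolynomial.monomial_add_induction_on with
  | C a => exact key 0 a
  | monomial_add m c f _ _ ih =>
    rw [mul_add, map_add, gE_add, gE_add, ih, key]

lemma gE_sq_pos {n : ℕ} (p : MvPolynomial (Fin n) ℝ) (hp : p ≠ 0) : 0 < gE (p * p) := by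
  have h0 : (0 : (Fin n → ℝ) → ℝ) ≤ fun x => MvPolynomial.eval x (p * p) := by
    intro x
    simp only [map_mul]
    exact mul_self_nonneg _
  have hop : Measure.IsOpenPosMeasure (gaussianReal 0 1) :=
    (gaussianReal_absolutelyContinuous' 0 one_ne_zero).isOpenPosMeasure
  rcases (integral_nonneg h0 : 0 ≤ gE (p * p)).eq_or_lt with h | h
  · exfalso
    have h1 := (integral_eq_zero_iff_of_nonneg h0 (gE_integrable _)).1 h.symm
    have h2 := (Continuous.ae_eq_iff_eq (Measure.pi fun _ : Fin n => gaussianReal 0 1)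
      (MvPolynomial.continuous_eval (p * p)) continuous_zero).1 h1
    have : p * p = 0 := MvPolynomial.funext fun x => by
      simpa using congrFun h2 x
    exact hp (mul_self_eq_zero.1 this)
  · exact h

lemma pderiv_comm' {n : ℕ} (i j : Fin n) (p : MvPolynomial (Fin n) ℝ) :
    MvPolynomial.pderiv i (MvPolynomial.pderiv j p) =
    MvPolynomial.pderiv j (MvPolynomial.pderiv i p) := by
  ext m
  simp only [MvPolynomial.coeff_pderiv]
  rcases eq_or_ne i j with rfl | h
  · rfl
  · rw [add_right_comm]
    simp [h, h.symm]
    ring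

lemma IsHarmonicPoly.pderiv {n : ℕ} {P : MvPolynomial (Fin n) ℝ} (h : IsHarmonicPoly P)
    (i : Fin n) : IsHarmonicPoly (MvPolynomial.pderiv i P) := by
  unfold IsHarmonicPoly at *
  have := congrArg (MvPolynomial.pderiv i) h
  rw [map_sum, map_zero] at this
  rw [← this]
  refine Finset.sum_congr rfl fun j _ => ?_
  rw [pderiv_comm' j i P, pderiv_comm' j i]

lemma exists_deg_eq {n : ℕ} {p : MvPolynomial (Fin n) ℝ} (hp : p ≠ 0) :
    ∃ m ∈ p.support, (m.sum fun _ e => e) = p.totalDegree := by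
  obtain ⟨m, hm, h⟩ := Finset.exists_mem_eq_sup p.support
    (MvPolynomial.support_nonempty.2 hp) (fun s : Fin n →₀ ℕ => s.sum fun _ e => e)
  exact ⟨m, hm, h.symm⟩

lemma pderiv_degree {n : ℕ} (i : Fin n) (g : MvPolynomial (Fin n) ℝ)
    (h : MvPolynomial.pderiv i g ≠ 0) :
    (MvPolynomial.pderiv i g).totalDegree + 1 ≤ g.totalDegree := by
  obtain ⟨m, hm, hd⟩ := exists_deg_eq h
  rw [← hd]
  have h1 : MvPolynomial.coeff (m + Finsupp.single i 1) g ≠ 0 := by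
    intro h0
    rw [MvPolynomial.mem_support_iff, MvPolynomial.coeff_pderiv, h0] at hm
    simp at hm
  have := MvPolynomial.le_totalDegree (MvPolynomial.mem_support_iff.2 h1)
  have h3 : ∀ x : Fin n →₀ ℕ, (x.sum fun _ e => e) = x.degree := fun _ => rfl
  rw [h3, map_add, Finsupp.degree_single] at this
  rw [h3]
  exact this

lemma gE_orth {n : ℕ} (k : ℕ) : ∀ (P g : MvPolynomial (Fin n) ℝ), IsHarmonicPoly P →
    P.IsHomogeneous k → g.totalDegree < k → gE (P * g) = 0 := by
  induction k with
  | zero => intro P g _ _ h; simp at h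
  | succ k ih =>
    intro P g hP hh hg
    have he := hh.sum_X_mul_pderiv
    have h1 : gE (((k + 1 : ℕ) • P) * g) = 0 := by
      rw [← he, Finset.sum_mul, gE_sum]
      have : ∀ i, gE (MvPolynomial.X i * MvPolynomial.pderiv i P * g) =
          gE (MvPolynomial.pderiv i (MvPolynomial.pderiv i P) * g) := by
        intro i
        rw [mul_assoc, gE_stein, MvPolynomial.pderiv_mul, gE_add]
        suffices gE (MvPolynomial.pderiv i P * MvPolynomial.pderiv i g) = 0 by rw [this, add_zero]
        by_cases h0 : MvPolynomial.pderiv i g = 0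
        · rw [h0, mul_zero, gE_zero]
        · refine ih _ _ (hP.pderiv i) (by simpa using hh.pderiv (i := i)) ?_
          have := pderiv_degree i g h0
          omega
      rw [Finset.sum_congr rfl fun i _ => this i, ← gE_sum, ← Finset.sum_mul]
      unfold IsHarmonicPoly at hP
      rw [hP, zero_mul, gE_zero]
    have h2 : ((k + 1 : ℕ) • P) * g = MvPolynomial.C ((k : ℝ) + 1) * (P * g) := by
      rw [nsmul_eq_mul]
      simp [mul_assoc]
    rw [h2, gE_C_mul] at h1
    have : (k : ℝ) + 1 ≠ 0 := by positivity
    exact (mul_eq_zero.1 h1).resolve_left this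

lemma harmonic_component {n : ℕ} {P : MvPolynomial (Fin n) ℝ} (h : IsHarmonicPoly P) (k : ℕ) :
    IsHarmonicPoly (MvPolynomial.homogeneousComponent k P) := by
  unfold IsHarmonicPoly at *
  ext m
  have hm := congrArg (MvPolynomial.coeff m) h
  simp only [MvPolynomial.coeff_sum, MvPolynomial.coeff_pderiv,
    MvPolynomial.coeff_homogeneousComponent, MvPolynomial.coeff_zero, map_add,
    Finsupp.degree_single] at hm ⊢
  by_cases hk : m.degree + 1 + 1 = k
  · simpa [hk] using hm
  · simp [hk]

lemma component_mul {n : ℕ} (p q : MvPolynomial (Fin n) ℝ) (a b : ℕ)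
    (hp : p.totalDegree ≤ a) (hq : q.totalDegree ≤ b) :
    MvPolynomial.homogeneousComponent (a + b) (p * q) =
    MvPolynomial.homogeneousComponent a p * MvPolynomial.homogeneousComponent b q := by
  ext m
  rw [MvPolynomial.coeff_homogeneousComponent, MvPolynomial.coeff_mul, MvPolynomial.coeff_mul]
  simp only [MvPolynomial.coeff_homogeneousComponent]
  have aux : ∀ (r : MvPolynomial (Fin n) ℝ) (c : ℕ) (x : Fin n →₀ ℕ), r.totalDegree ≤ c →
      c < x.degree → MvPolynomial.coeff x r = 0 := by
    intro r c x h1 h2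
    by_contra h
    have := MvPolynomial.le_totalDegree (MvPolynomial.mem_support_iff.2 h)
    have h3 : x.degree = x.sum fun _ e => e := rfl
    omega
  split_ifs with h
  · refine Finset.sum_congr rfl fun x hx => ?_
    have hx' : x.1.degree + x.2.degree = a + b := by
      rw [← h, ← map_add, Finset.HasAntidiagonal.mem_antidiagonal.1 hx]
    rcases lt_trichotomy x.1.degree a with h1 | h1 | h1
    · rw [aux q b x.2 hq (by omega)]; simp
    · have : x.2.degree = b := by omega
      simp [h1, this]
    · rw [aux p a x.1 hp h1]; simp
  · symm
    refine Finset.sum_eq_zero fun x hx => ?_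
    have hx' : x.1.degree + x.2.degree = m.degree := by
      rw [← map_add, Finset.HasAntidiagonal.mem_antidiagonal.1 hx]
    split_ifs
    · omega
    all_goals simp

lemma top_ne_zero {n : ℕ} (p : MvPolynomial (Fin n) ℝ) (hp : p ≠ 0) :
    MvPolynomial.homogeneousComponent p.totalDegree p ≠ 0 := by
  obtain ⟨m, hm, hd⟩ := exists_deg_eq hp
  intro h
  have := congrArg (MvPolynomial.coeff m) h
  rw [MvPolynomial.coeff_homogeneousComponent, if_pos (by rw [← hd]; rfl)] at this
  exact MvPolynomial.mem_support_iff.1 hm this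

/-- A nonzero real harmonic polynomial is squarefree. -/
lemma harmonic_squarefree {n : ℕ} {P : MvPolynomial (Fin n) ℝ} (hP : IsHarmonicPoly P)
    (h0 : P ≠ 0) : Squarefree P := by
  rintro f ⟨g, hg⟩
  by_contra hu
  have hf0 : f ≠ 0 := by rintro rfl; simp at hg; exact h0 hg
  have hg0 : g ≠ 0 := by rintro rfl; simp at hg; exact h0 hg
  have hfd : f.totalDegree ≠ 0 := by
    intro h
    rw [MvPolynomial.totalDegree_eq_zero_iff_eq_C] at h
    apply hu
    rw [h] at hf0 ⊢
    refine (IsUnit.mk0 _ ?_).map MvPolynomial.C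
    intro h'; rw [h'] at hf0; simp at hf0
  have hc := component_mul (f * f) g (f.totalDegree + f.totalDegree) g.totalDegree
    (MvPolynomial.totalDegree_mul _ _) le_rfl
  rw [component_mul f f _ _ le_rfl le_rfl, ← hg] at hc
  set F := MvPolynomial.homogeneousComponent f.totalDegree f
  set G := MvPolynomial.homogeneousComponent g.totalDegree g
  have hF : F ≠ 0 := top_ne_zero f hf0
  have hG : G ≠ 0 := top_ne_zero g hg0
  have ho := gE_orth (f.totalDegree + f.totalDegree + g.totalDegree) _ G
    (harmonic_component hP _) (MvPolynomial.homogeneousComponent_isHomogeneous _ _)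
    (by
      have := (MvPolynomial.homogeneousComponent_isHomogeneous g.totalDegree g).totalDegree hG
      change G.totalDegree = _ at this
      omega)
  rw [hc] at ho
  have := gE_sq_pos (F * G) (mul_ne_zero hF hG)
  rw [show F * G * (F * G) = F * F * G * G by ring, ho] at this
  exact lt_irrefl _ this
end GaussPart

section LinePart
open Polynomial

/-- the substitution `z ↦ z + s v`. -/
noncomputable def lineHom {n : ℕ} (v : Fin n → ℝ) :
    MvPolynomial (Fin n) ℝ →ₐ[ℝ] (MvPolynomial (Fin n) ℝ)[X] :=
  MvPolynomial.aeval (fun i => C (MvPolynomial.X i) + C (MvPolynomial.C (v i)) * X)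

noncomputable def lineAut {n : ℕ} (v : Fin n → ℝ) :
    (MvPolynomial (Fin n) ℝ)[X] →+* (MvPolynomial (Fin n) ℝ)[X] :=
  eval₂RingHom (lineHom v).toRingHom X

lemma lineAut_C {n : ℕ} (v : Fin n → ℝ) (p : MvPolynomial (Fin n) ℝ) :
    lineAut v (C p) = lineHom v p := by
  simp [lineAut]

lemma lineAut_X {n : ℕ} (v : Fin n → ℝ) : lineAut v X = X := by
  simp [lineAut]

lemma lineHom_C {n : ℕ} (v : Fin n → ℝ) (r : ℝ) :
    lineHom v (MvPolynomial.C r) = C (MvPolynomial.C r) := by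
  simp [lineHom]

lemma lineHom_X {n : ℕ} (v : Fin n → ℝ) (i : Fin n) :
    lineHom v (MvPolynomial.X i) = C (MvPolynomial.X i) + C (MvPolynomial.C (v i)) * X := by
  simp [lineHom]

lemma lineAut_neg {n : ℕ} (v w : Fin n → ℝ) (hw : ∀ i, w i = - v i)
    (f : (MvPolynomial (Fin n) ℝ)[X]) :
    lineAut w (lineAut v f) = f := by
  have : (lineAut w).comp (lineAut v) = RingHom.id _ := by
    apply Polynomial.ringHom_ext'
    · apply MvPolynomial.ringHom_ext
      · intro r
        simp [lineAut_C]
      · intro i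
        simp [lineAut_C, lineHom_X, lineAut_X, hw]
        ring
    · simp [lineAut_X]
  exact congrArg (fun g => g f) this

lemma lineHom_squarefree {n : ℕ} (v : Fin n → ℝ) {P : MvPolynomial (Fin n) ℝ}
    (h0 : P ≠ 0) (h : Squarefree P) : Squarefree (lineHom v P) := by
  intro f hf
  have h1 := map_dvd (lineAut (fun i => - v i)) hf
  rw [← lineAut_C, lineAut_neg v _ (fun _ => rfl), map_mul] at h1
  set g := lineAut (fun i => - v i) f with hg
  have hC : (C P : (MvPolynomial (Fin n) ℝ)[X]) ≠ 0 := by simpa using h0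
  have hd : g.natDegree = 0 := by
    have := natDegree_le_of_dvd ((dvd_mul_right g g).trans h1) hC
    simpa using this
  rw [natDegree_eq_zero] at hd
  obtain ⟨g0, hg0⟩ := hd
  rw [← hg0, ← C_mul] at h1
  have h2 : g0 * g0 ∣ P := by
    rw [C_dvd_iff_dvd_coeff] at h1
    simpa using h1 0
  have h3 : IsUnit g := hg0 ▸ (h g0 h2).map C
  have h4 : lineAut v g = f := lineAut_neg _ _ (fun i => by simp) f
  rw [← h4]
  exact h3.map _

/-- weighted degree bound -/
def WD {n : ℕ} (F : (MvPolynomial (Fin n) ℝ)[X]) (m : ℕ) : Prop :=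
  ∀ j, F.coeff j = 0 ∨ (F.coeff j).totalDegree + j ≤ m

lemma WD.mono {n : ℕ} {F : (MvPolynomial (Fin n) ℝ)[X]} {m m' : ℕ} (h : WD F m) (hm : m ≤ m') :
    WD F m' := fun j => (h j).imp_right fun h => h.trans hm

lemma WD.add {n : ℕ} {F G : (MvPolynomial (Fin n) ℝ)[X]} {m : ℕ} (h : WD F m) (h' : WD G m) :
    WD (F + G) m := by
  intro j
  rw [coeff_add]
  rcases h j with h1 | h1 <;> rcases h' j with h2 | h2
  · left; simp [h1, h2]
  · right; simpa [h1] using h2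
  · right; simpa [h2] using h1
  · right
    have := MvPolynomial.totalDegree_add (F.coeff j) (G.coeff j)
    omega

lemma WD.mul {n : ℕ} {F G : (MvPolynomial (Fin n) ℝ)[X]} {m m' : ℕ} (h : WD F m) (h' : WD G m') :
    WD (F * G) (m + m') := by
  intro j
  by_cases hj : (F * G).coeff j = 0
  · exact Or.inl hj
  right
  have hle : j ≤ m + m' := by
    by_contra hlt
    apply hj
    rw [coeff_mul]
    refine Finset.sum_eq_zero fun x hx => ?_
    have hx := Finset.HasAntidiagonal.mem_antidiagonal.1 hx
    rcases h x.1 with h1 | h1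
    · rw [h1, zero_mul]
    rcases h' x.2 with h2 | h2
    · rw [h2, mul_zero]
    omega
  have : ((F * G).coeff j).totalDegree ≤ m + m' - j := by
    rw [coeff_mul]
    refine MvPolynomial.totalDegree_finsetSum_le fun x hx => ?_
    have hx := Finset.HasAntidiagonal.mem_antidiagonal.1 hx
    rcases h x.1 with h1 | h1
    · simp [h1]
    rcases h' x.2 with h2 | h2
    · simp [h2]
    have := MvPolynomial.totalDegree_mul (F.coeff x.1) (G.coeff x.2)
    omega
  omega

lemma WD_C {n : ℕ} (p : MvPolynomial (Fin n) ℝ) : WD (C p) p.totalDegree := by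
  intro j
  rw [coeff_C]
  split_ifs with h
  · right; omega
  · left; rfl

lemma WD_X {n : ℕ} : WD (X : (MvPolynomial (Fin n) ℝ)[X]) 1 := by
  intro j
  rw [coeff_X]
  split_ifs with h
  · right; simp; omega
  · left; rfl

lemma WD_pow {n : ℕ} {F : (MvPolynomial (Fin n) ℝ)[X]} {m : ℕ} (h : WD F m) (e : ℕ) :
    WD (F ^ e) (e * m) := by
  induction e with
  | zero => simpa using WD_C (1 : MvPolynomial (Fin n) ℝ)
  | succ e ih => rw [pow_succ, add_mul, one_mul]; exact ih.mul h

lemma WD_prod {n : ℕ} {ι : Type*} (s : Finset ι) (F : ι → (MvPolynomial (Fin n) ℝ)[X]) (m : ι → ℕ)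
    (h : ∀ i, WD (F i) (m i)) : WD (∏ i ∈ s, F i) (∑ i ∈ s, m i) := by
  classical
  induction s using Finset.induction_on with
  | empty => simpa using WD_C (1 : MvPolynomial (Fin n) ℝ)
  | insert a s ha ih => rw [Finset.prod_insert ha, Finset.sum_insert ha]; exact (h a).mul ih

lemma WD_sum {n : ℕ} {ι : Type*} (s : Finset ι) (F : ι → (MvPolynomial (Fin n) ℝ)[X]) (m : ℕ)
    (h : ∀ i ∈ s, WD (F i) m) : WD (∑ i ∈ s, F i) m := by
  classical
  induction s using Finset.induction_on with
  | empty => intro j; left; simp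
  | insert a s ha ih =>
    rw [Finset.sum_insert ha]
    exact (h a (Finset.mem_insert_self _ _)).add (ih fun i hi => h i (Finset.mem_insert_of_mem hi))

lemma WD_lineHom {n : ℕ} (v : Fin n → ℝ) (P : MvPolynomial (Fin n) ℝ) :
    WD (lineHom v P) P.totalDegree := by
  have hX : ∀ i, WD (lineHom v (MvPolynomial.X i)) 1 := by
    intro i
    rw [lineHom_X]
    refine WD.add ?_ ?_
    · simpa using WD_C (MvPolynomial.X i : MvPolynomial (Fin n) ℝ)
    · simpa using (WD_C (MvPolynomial.C (v i) : MvPolynomial (Fin n) ℝ)).mul WD_X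
  conv_lhs => rw [P.as_sum, map_sum]
  refine WD_sum _ _ _ fun m hm => ?_
  have hle := MvPolynomial.le_totalDegree hm
  rw [MvPolynomial.monomial_eq, map_mul, lineHom_C, Finsupp.prod_fintype _ _ (by simp), map_prod]
  have h1 : WD (∏ i, lineHom v (MvPolynomial.X i ^ m i)) (∑ i, m i) := by
    apply WD_prod
    intro i
    rw [map_pow]
    simpa using WD_pow (hX i) (m i)
  have h2 := (WD_C (MvPolynomial.C (MvPolynomial.coeff m P) : MvPolynomial (Fin n) ℝ)).mul h1
  refine h2.mono ?_
  rw [Finsupp.sum_fintype _ _ (by simp)] at hle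
  simpa using hle

lemma WD_derivative {n : ℕ} {F : (MvPolynomial (Fin n) ℝ)[X]} {m : ℕ} (h : WD F m) :
    WD (derivative F) (m - 1) := by
  intro j
  rw [coeff_derivative]
  rcases h (j + 1) with h1 | h1
  · left; simp [h1]
  · right
    have h2 := MvPolynomial.totalDegree_mul (F.coeff (j + 1))
      ((j : MvPolynomial (Fin n) ℝ) + 1)
    have h3 : ((j : MvPolynomial (Fin n) ℝ) + 1).totalDegree = 0 := by
      have : ((j : MvPolynomial (Fin n) ℝ) + 1) = MvPolynomial.C ((j : ℝ) + 1) := by simp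
      rw [this, MvPolynomial.totalDegree_C]
    omega

lemma resultant_degree {n : ℕ} (F G : (MvPolynomial (Fin n) ℝ)[X]) (a b : ℕ)
    (hF : WD F a) (hG : WD G b) : (resultant F G a b).totalDegree ≤ a * b := by
  unfold resultant
  rw [Matrix.det_apply]
  refine MvPolynomial.totalDegree_finsetSum_le fun σ _ => ?_
  set M := sylvester F G a b with hM
  let B : Fin (a + b) → ℕ := fun j => j.addCases (fun j₁ => b + (j₁ : ℕ)) (fun j₁ => a + (j₁ : ℕ))
  have hent : ∀ i j, M i j = 0 ∨ (M i j).totalDegree + (i : ℕ) ≤ B j := by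
    intro i j
    refine Fin.addCases (fun j₁ => ?_) (fun j₁ => ?_) j
    · simp only [hM, sylvester, Matrix.of_apply, Fin.addCases_left, B]
      split_ifs with h
      · rw [Set.mem_Icc] at h
        refine (hG _).imp_right fun h' => ?_
        omega
      · left; rfl
    · simp only [hM, sylvester, Matrix.of_apply, Fin.addCases_right, B]
      split_ifs with h
      · rw [Set.mem_Icc] at h
        refine (hF _).imp_right fun h' => ?_
        omega
      · left; rfl
  have hB : ∑ j, B j = a * b + ∑ j : Fin (a + b), (j : ℕ) := by
    rw [Fin.sum_univ_add, Fin.sum_univ_add]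
    simp only [B, Fin.addCases_left, Fin.addCases_right, Finset.sum_add_distrib, Fin.val_castAdd,
      Fin.val_natAdd]
    simp
    ring
  have hprod : (∏ i, M (σ i) i).totalDegree ≤ a * b := by
    by_cases hz : ∃ i, M (σ i) i = 0
    · obtain ⟨i, hi⟩ := hz
      have h0 : ∏ i, M (σ i) i = 0 := Finset.prod_eq_zero (Finset.mem_univ i) hi
      rw [h0]
      simp
    · push Not at hz
      refine (MvPolynomial.totalDegree_finsetProd _ _).trans ?_
      have h1 : ∑ i, ((M (σ i) i).totalDegree + ((σ i : Fin (a + b)) : ℕ)) ≤ ∑ j, B j :=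
        Finset.sum_le_sum fun i _ => (hent (σ i) i).resolve_left (hz i)
      rw [Finset.sum_add_distrib, hB, Equiv.sum_comp σ (fun j : Fin (a + b) => (j : ℕ))] at h1
      omega
  rcases Int.units_eq_one_or (Equiv.Perm.sign σ) with h | h
  · simpa [h] using hprod
  · simpa [h] using hprod

lemma lineHom_eval {n : ℕ} (v z : Fin n → ℝ) (P : MvPolynomial (Fin n) ℝ) (s : ℝ) :
    ((lineHom v P).map (MvPolynomial.eval z)).eval s = MvPolynomial.eval (fun i => z i + s * v i) P := by
  have : ((evalRingHom s).comp ((mapRingHom (MvPolynomial.eval z)).comp (lineHom v).toRingHom)) =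
      MvPolynomial.eval (fun i => z i + s * v i) := by
    apply MvPolynomial.ringHom_ext
    · intro r
      simp
    · intro i
      simp [lineHom_X]; ring
  exact congrArg (fun g => g P) this

lemma lineHom_coeff_top {n : ℕ} (v : Fin n → ℝ) (P : MvPolynomial (Fin n) ℝ) :
    (lineHom v P).coeff P.totalDegree =
      MvPolynomial.C (MvPolynomial.eval v (MvPolynomial.homogeneousComponent P.totalDegree P)) := by
  set k := P.totalDegree with hk
  have h0 : ((lineHom v P).coeff k).totalDegree = 0 := by
    rcases WD_lineHom v P k with h | h
    · simp [h]
    · omega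
  rw [MvPolynomial.totalDegree_eq_zero_iff_eq_C] at h0
  have hp : (lineHom v P).map (MvPolynomial.eval 0) =
      ∑ j ∈ Finset.range (k + 1),
        C (MvPolynomial.eval v (MvPolynomial.homogeneousComponent j P)) * X ^ j := by
    apply Polynomial.funext
    intro s
    rw [lineHom_eval, eval_finsetSum]
    conv_lhs => rw [← MvPolynomial.sum_homogeneousComponent P, map_sum]
    refine Finset.sum_congr rfl fun j _ => ?_
    have hh := MvPolynomial.homogeneousComponent_isHomogeneous j P
    rw [MvPolynomial.eval_eq, MvPolynomial.eval_eq]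
    simp only [eval_mul, eval_C, eval_pow, eval_X, Finset.sum_mul]
    refine Finset.sum_congr rfl fun m hm => ?_
    have hd := hh.degree_eq_sum_deg_support hm
    simp only [Pi.zero_apply, zero_add, mul_pow, Finset.prod_mul_distrib]
    rw [Finset.prod_pow_eq_pow_sum]
    have : ∑ i ∈ m.support, m i = j := by rw [hd]
    rw [this]; ring
  have hc := congrArg (fun q => q.coeff k) hp
  simp only [coeff_map, finsetSum_coeff, coeff_C_mul, coeff_X_pow] at hc
  rw [h0] at hc ⊢
  simp at hc
  rw [hc]

lemma exists_direction {n : ℕ} (P : MvPolynomial (Fin n) ℝ)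
    (hP : MvPolynomial.homogeneousComponent P.totalDegree P ≠ 0) :
    ∃ (v : Fin n → ℝ) (c : ℝ), c ≠ 0 ∧ (lineHom v P).coeff P.totalDegree = MvPolynomial.C c := by
  by_contra! hcon
  apply hP
  apply MvPolynomial.funext
  intro v
  by_contra h
  exact hcon v _ (by simpa using h) (lineHom_coeff_top v P)

lemma lineHom_natDegree {n : ℕ} (v : Fin n → ℝ) (P : MvPolynomial (Fin n) ℝ) (c : ℝ) (hc : c ≠ 0)
    (h : (lineHom v P).coeff P.totalDegree = MvPolynomial.C c) :
    (lineHom v P).natDegree = P.totalDegree := by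
  apply natDegree_eq_of_le_of_coeff_ne_zero
  · rw [natDegree_le_iff_coeff_eq_zero]
    intro N hN
    rcases WD_lineHom v P N with h1 | h1
    · exact h1
    · omega
  · rw [h]; simpa using hc

lemma squarefree_map_frac {n : ℕ} (F : (MvPolynomial (Fin n) ℝ)[X]) (c : ℝ) (hc : c ≠ 0)
    (hl : F.leadingCoeff = MvPolynomial.C c) (hF : Squarefree F) :
    Squarefree (F.map (algebraMap _ (FractionRing (MvPolynomial (Fin n) ℝ)))) := by
  set K := FractionRing (MvPolynomial (Fin n) ℝ)
  set F0 := C (MvPolynomial.C c⁻¹) * F with hF0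
  have hu : IsUnit (C (MvPolynomial.C c⁻¹) : (MvPolynomial (Fin n) ℝ)[X]) :=
    ((IsUnit.mk0 _ (inv_ne_zero hc)).map MvPolynomial.C).map C
  have hm : F0.Monic := by
    rw [Monic, hF0, leadingCoeff_mul, leadingCoeff_C, hl, ← MvPolynomial.C_mul, inv_mul_cancel₀ hc]
    simp
  intro G hG
  have hG' : G * G ∣ F0.map (algebraMap _ K) := by
    rw [hF0, Polynomial.map_mul]; exact hG.mul_left _
  obtain ⟨g, hg⟩ := IsIntegrallyClosed.eq_map_mul_C_of_dvd K hm ((dvd_mul_right G G).trans hG')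
  have hFne : F0.map (algebraMap _ K) ≠ 0 := (hm.map _).ne_zero
  have hG0 : G ≠ 0 := by
    rintro rfl
    simp at hG'
    exact hFne (by simpa using hG')
  have hlc : G.leadingCoeff ≠ 0 := leadingCoeff_ne_zero.2 hG0
  have hinj := FaithfulSMul.algebraMap_injective (MvPolynomial (Fin n) ℝ) K
  have hgm : g.Monic := by
    have := congrArg leadingCoeff hg
    rw [leadingCoeff_mul, leadingCoeff_C, leadingCoeff_map_of_injective hinj] at this
    have h1 := mul_right_cancel₀ hlc (this.trans (one_mul _).symm)
    exact hinj (by rw [h1, map_one])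
  have hd : (g * g).map (algebraMap _ K) ∣ F0.map (algebraMap _ K) := by
    refine dvd_trans ?_ hG'
    rw [Polynomial.map_mul]
    have : g.map (algebraMap _ K) ∣ G := ⟨_, hg.symm⟩
    exact mul_dvd_mul this this
  rw [map_dvd_map _ hinj (hgm.mul hgm), hF0] at hd
  have hgu : IsUnit g := hF g ((hu.dvd_mul_left).1 hd)
  rw [← hg]
  exact (hgu.map (mapRingHom (algebraMap _ K))).mul ((IsUnit.mk0 _ hlc).map C)

lemma resultant_ne {n : ℕ} (F : (MvPolynomial (Fin n) ℝ)[X]) (c : ℝ) (hc : c ≠ 0)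
    (hl : F.leadingCoeff = MvPolynomial.C c) (hF : Squarefree F) :
    resultant F (derivative F) F.natDegree (F.natDegree - 1) ≠ 0 := by
  set K := FractionRing (MvPolynomial (Fin n) ℝ)
  have hinj := FaithfulSMul.algebraMap_injective (MvPolynomial (Fin n) ℝ) K
  have hs := squarefree_map_frac F c hc hl hF
  rw [← PerfectField.separable_iff_squarefree, Separable] at hs
  intro h
  have h1 := congrArg (algebraMap _ K) h
  rw [← resultant_map_map, map_zero, ← derivative_map] at h1
  set f := F.map (algebraMap _ K)
  have hd : f.natDegree = F.natDegree := natDegree_map_eq_of_injective hinj _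
  have hd' : (derivative f).natDegree = F.natDegree - 1 := by
    rw [← hd]; exact natDegree_derivative f
  have h2 : resultant f (derivative f) = 0 := by
    rw [hd', hd]; exact h1
  exact (resultant_eq_zero_iff.1 h2).2 hs

end LinePart

section OneDim
open Polynomial

lemma multiset_fin {α : Type*} (m : Multiset α) (k : ℕ) (h : m.card = k) :
    ∃ r : Fin k → α, (Finset.univ : Finset (Fin k)).val.map r = m := by
  have hl : m.toList.length = k := by simpa using h
  subst hl
  exact ⟨m.toList.get, by rw [Fin.univ_val_map, List.ofFn_get, Multiset.coe_toList]⟩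

lemma real_factor (p : ℝ[X]) (k : ℕ) (hk : p.natDegree = k) :
    ∃ r : Fin k → ℂ, p.map (algebraMap ℝ ℂ) = C (p.leadingCoeff : ℂ) * Lagrange.nodal Finset.univ r ∧
      (p.map (algebraMap ℝ ℂ)).roots = (Finset.univ : Finset (Fin k)).val.map r := by
  have hs : (p.map (algebraMap ℝ ℂ)).Splits := IsAlgClosed.splits _
  have hd : (p.map (algebraMap ℝ ℂ)).roots.card = k := by
    rw [← hs.natDegree_eq_card_roots, natDegree_map, hk]
  obtain ⟨r, hr⟩ := multiset_fin _ k hd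
  refine ⟨r, ?_, hr.symm⟩
  have := hs.eq_prod_roots
  rw [← hr, Multiset.map_map, leadingCoeff_map] at this
  rw [this]
  rfl

lemma real_factor_norm (p : ℝ[X]) (k : ℕ) (r : Fin k → ℂ)
    (h : p.map (algebraMap ℝ ℂ) = C (p.leadingCoeff : ℂ) * Lagrange.nodal Finset.univ r) (s : ℝ) :
    |p.eval s| = |p.leadingCoeff| * ∏ i, ‖(s : ℂ) - r i‖ := by
  have h1 := congrArg (fun q => ‖q.eval (s : ℂ)‖) h
  simp only [eval_mul, eval_C, Lagrange.eval_nodal, norm_mul, norm_prod, Complex.norm_real] at h1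
  rw [← Real.norm_eq_abs, ← Real.norm_eq_abs, ← h1]
  have : (p.map (algebraMap ℝ ℂ)).eval (s : ℂ) = ((p.eval s : ℝ) : ℂ) := by
    have := eval_map_apply (algebraMap ℝ ℂ) (p := p) s
    simpa using this
  rw [this, Complex.norm_real]

lemma resultant_norm (p : ℝ[X]) (k : ℕ) (hk : p.natDegree = k) (r : Fin k → ℂ)
    (h : p.map (algebraMap ℝ ℂ) = C (p.leadingCoeff : ℂ) * Lagrange.nodal Finset.univ r)
    (hr : (p.map (algebraMap ℝ ℂ)).roots = (Finset.univ : Finset (Fin k)).val.map r) :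
    |resultant p (derivative p) k (k - 1)| = |p.leadingCoeff| ^ (k - 1) *
      ∏ i, (|p.leadingCoeff| * ∏ j ∈ Finset.univ.erase i, ‖r i - r j‖) := by
  have h1 := resultant_map_map p (derivative p) k (k - 1) (algebraMap ℝ ℂ)
  set q := p.map (algebraMap ℝ ℂ) with hq
  have hqd : q.natDegree = k := by rw [hq, natDegree_map, hk]
  have hqd' : (derivative q).natDegree ≤ k - 1 := by rw [natDegree_derivative, hqd]
  have h2 := resultant_eq_prod_eval q (derivative q) (k - 1) hqd' (IsAlgClosed.splits _)
  rw [← derivative_map, ← hq] at h1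
  rw [hqd, h1, hr, Multiset.map_map] at h2
  have hl : q.leadingCoeff = (p.leadingCoeff : ℂ) := by rw [hq, leadingCoeff_map]; rfl
  have h3 := congrArg norm h2
  rw [norm_algebraMap', Real.norm_eq_abs, hl, norm_mul, norm_pow, Complex.norm_real,
    Real.norm_eq_abs] at h3
  rw [h3]
  congr 1
  change ‖∏ i, (derivative q).eval (r i)‖ = _
  rw [norm_prod]
  refine Finset.prod_congr rfl fun i _ => ?_
  rw [h, derivative_C_mul, eval_mul, eval_C,
    Lagrange.eval_nodal_derivative_eval_node_eq (Finset.mem_univ i), Lagrange.eval_nodal,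
    norm_mul, norm_prod, Complex.norm_real, Real.norm_eq_abs]

lemma pointwise_ineq (p : ℝ[X]) (k : ℕ) (hk2 : 1 ≤ k) (hk : p.natDegree = k) (r : Fin k → ℂ)
    (h : p.map (algebraMap ℝ ℂ) = C (p.leadingCoeff : ℂ) * Lagrange.nodal Finset.univ r)
    (hr : (p.map (algebraMap ℝ ℂ)).roots = (Finset.univ : Finset (Fin k)).val.map r) (s : ℝ) :
    ∃ i, |resultant p (derivative p) k (k - 1)| * ‖(s : ℂ) - r i‖ ^ (k * (k - 1)) ≤
      (|p.leadingCoeff| * 2 ^ (k * (k - 1))) * |p.eval s| ^ (2 * (k - 1)) := by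
  have hne : Nonempty (Fin k) := ⟨⟨0, hk2⟩⟩
  obtain ⟨i₀, hi₀⟩ := Finite.exists_min (fun i => ‖(s : ℂ) - r i‖)
  refine ⟨i₀, ?_⟩
  rw [resultant_norm p k hk r h hr, real_factor_norm p k r h s]
  set w : Fin k → ℝ := fun i => ‖(s : ℂ) - r i‖ with hw
  have hw0 : ∀ i, 0 ≤ w i := fun i => norm_nonneg _
  change _ * w i₀ ^ _ ≤ _
  set c := |p.leadingCoeff|
  have hc : 0 ≤ c := abs_nonneg _
  have hcard : ∀ i : Fin k, (Finset.univ.erase i).card = k - 1 := fun i => by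
    rw [Finset.card_erase_of_mem (Finset.mem_univ i)]; simp
  have hpair : ∀ i j, ‖r i - r j‖ * w i₀ ≤ 2 * (w i * w j) := by
    intro i j
    have h1 : ‖r i - r j‖ ≤ w i + w j := by
      have : r i - r j = ((s : ℂ) - r j) - ((s : ℂ) - r i) := by ring
      rw [this]
      linarith [norm_sub_le ((s : ℂ) - r j) ((s : ℂ) - r i)]
    have h2 := hi₀ i
    have h3 := hi₀ j
    change w i₀ ≤ w i at h2
    change w i₀ ≤ w j at h3
    calc ‖r i - r j‖ * w i₀ ≤ (w i + w j) * w i₀ := mul_le_mul_of_nonneg_right h1 (hw0 _)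
      _ = w i * w i₀ + w i₀ * w j := by ring
      _ ≤ w i * w j + w i * w j :=
        add_le_add (mul_le_mul_of_nonneg_left h3 (hw0 _)) (mul_le_mul_of_nonneg_right h2 (hw0 _))
      _ = _ := by ring
  have hinner : ∀ i, (∏ j ∈ Finset.univ.erase i, ‖r i - r j‖) * w i₀ ^ (k - 1) ≤
      2 ^ (k - 1) * (w i ^ (k - 1) * ∏ j ∈ Finset.univ.erase i, w j) := by
    intro i
    rw [← hcard i, ← Finset.prod_const, ← Finset.prod_const, ← Finset.prod_const,
      ← Finset.prod_mul_distrib, ← Finset.prod_mul_distrib, ← Finset.prod_mul_distrib]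
    exact Finset.prod_le_prod (fun j _ => mul_nonneg (norm_nonneg _) (hw0 _))
      (fun j _ => hpair i j)
  have hdouble : ∏ i, ∏ j ∈ Finset.univ.erase i, w j = (∏ i, w i) ^ (k - 1) := by
    have : ∏ i, ∏ j ∈ Finset.univ.erase i, w j = ∏ j, ∏ i ∈ Finset.univ.erase j, w j := by
      refine Finset.prod_comm' ?_
      intro x y
      simp [ne_comm]
    rw [this, ← Finset.prod_pow]
    refine Finset.prod_congr rfl fun j _ => ?_
    rw [Finset.prod_const, hcard]
  have houter : (∏ i, ∏ j ∈ Finset.univ.erase i, ‖r i - r j‖) * w i₀ ^ (k * (k - 1)) ≤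
      2 ^ (k * (k - 1)) * (∏ i, w i) ^ (2 * (k - 1)) := by
    have h1 := Finset.prod_le_prod (s := Finset.univ)
      (fun i _ => mul_nonneg (Finset.prod_nonneg fun j _ => norm_nonneg (r i - r j))
        (pow_nonneg (hw0 i₀) (k - 1))) (fun i _ => hinner i)
    simp only [Finset.prod_mul_distrib, Finset.prod_const, Finset.card_univ, Fintype.card_fin,
      hdouble, Finset.prod_pow] at h1
    rw [← pow_mul, ← pow_mul, ← pow_add, mul_comm (k - 1) k, ← two_mul] at h1
    exact h1
  rw [Finset.prod_mul_distrib, Finset.prod_const, Finset.card_univ, Fintype.card_fin]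
  calc c ^ (k - 1) * (c ^ k * ∏ i, ∏ j ∈ Finset.univ.erase i, ‖r i - r j‖) * w i₀ ^ (k * (k - 1))
      = (c ^ (k - 1) * c ^ k) * ((∏ i, ∏ j ∈ Finset.univ.erase i, ‖r i - r j‖)
        * w i₀ ^ (k * (k - 1))) := by ring
    _ ≤ (c ^ (k - 1) * c ^ k) * (2 ^ (k * (k - 1)) * (∏ i, w i) ^ (2 * (k - 1))) :=
      mul_le_mul_of_nonneg_left houter (by positivity)
    _ = _ := by
      have : c ^ (k - 1) * c ^ k = c * c ^ (2 * (k - 1)) := by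
        rw [← pow_add, ← pow_succ']; congr 1; omega
      rw [this, mul_pow]
      ring

open scoped ENNReal

lemma one_dim_bound (θ : ℝ) (hθ0 : 0 ≤ θ) (hθ : θ < 1) :
    ∃ K : ℝ≥0∞, K < ⊤ ∧ ∀ x : ℝ, ∫⁻ s in Set.Icc (0 : ℝ) 1, (‖s - x‖ₑ⁻¹) ^ θ ≤ K := by
  have hfin : ∫⁻ t in Set.Icc (-1 : ℝ) 1, (‖t‖ₑ⁻¹) ^ θ < ⊤ := by
    have hi : IntegrableOn (fun t : ℝ => |t| ^ (-θ)) (Set.Icc (-1 : ℝ) 1) := by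
      rw [integrableOn_Icc_iff_integrableOn_Ioc,
        ← intervalIntegrable_iff_integrableOn_Ioc_of_le (by norm_num)]
      have hr : IntervalIntegrable (fun t : ℝ => |t| ^ (-θ)) volume 0 1 := by
        refine (intervalIntegral.intervalIntegrable_rpow' (by linarith : -1 < -θ)).congr ?_
        intro t ht
        rw [Set.uIoc_of_le zero_le_one] at ht
        simp [abs_of_pos ht.1]
      have hl : IntervalIntegrable (fun t : ℝ => |t| ^ (-θ)) volume (-1) 0 := by
        have := (IntervalIntegrable.iff_comp_neg (by finiteness)).1 hr
        simpa using this.symm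
      exact hl.trans hr
    have h2 := hi.2
    rw [hasFiniteIntegral_iff_enorm] at h2
    refine lt_of_le_of_lt (le_of_eq ?_) h2
    refine lintegral_congr_ae ?_
    have : ∀ᵐ t : ℝ ∂(volume.restrict (Set.Icc (-1 : ℝ) 1)), t ≠ 0 :=
      ae_restrict_of_ae (Measure.ae_ne volume 0)
    filter_upwards [this] with t ht
    have h3 : 0 < |t| := abs_pos.2 ht
    rw [← ofReal_norm, ← ofReal_norm, Real.norm_eq_abs, Real.norm_eq_abs,
      abs_of_nonneg (Real.rpow_nonneg h3.le _), ← ENNReal.ofReal_inv_of_pos h3,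
      ENNReal.ofReal_rpow_of_pos (inv_pos.2 h3), Real.inv_rpow h3.le, Real.rpow_neg h3.le]
  refine ⟨1 + ∫⁻ t in Set.Icc (-1 : ℝ) 1, (‖t‖ₑ⁻¹) ^ θ, ENNReal.add_lt_top.2 ⟨by simp, hfin⟩, ?_⟩
  intro x
  set f : ℝ → ℝ≥0∞ := (Set.Icc (-1 : ℝ) 1).indicator fun t => (‖t‖ₑ⁻¹) ^ θ with hf
  have hfm : Measurable f := by
    refine Measurable.indicator ?_ measurableSet_Icc
    fun_prop
  have hle : ∀ s : ℝ, (‖s - x‖ₑ⁻¹) ^ θ ≤ 1 + f (s - x) := by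
    intro s
    by_cases h : s - x ∈ Set.Icc (-1 : ℝ) 1
    · rw [hf, Set.indicator_of_mem h]; exact le_add_self
    · refine le_add_right ?_
      have h1 : 1 ≤ ‖s - x‖ₑ := by
        rw [← ofReal_norm, Real.norm_eq_abs, ENNReal.one_le_ofReal]
        by_contra h'
        push Not at h'
        exact h (abs_le.1 h'.le)
      refine ENNReal.rpow_le_one ?_ hθ0
      exact ENNReal.inv_le_one.2 h1
  calc ∫⁻ s in Set.Icc (0 : ℝ) 1, (‖s - x‖ₑ⁻¹) ^ θ
      ≤ ∫⁻ s in Set.Icc (0 : ℝ) 1, (1 + f (s - x)) := lintegral_mono hle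
    _ = 1 + ∫⁻ s in Set.Icc (0 : ℝ) 1, f (s - x) := by
      rw [lintegral_add_left measurable_const]; simp
    _ ≤ 1 + ∫⁻ s, f (s - x) := by gcongr; exact Measure.restrict_le_self
    _ = 1 + ∫⁻ s, f s := by rw [lintegral_sub_right_eq_self f x]
    _ = _ := by rw [hf, lintegral_indicator measurableSet_Icc]

lemma root_bound (θ : ℝ) (hθ0 : 0 ≤ θ) (s : ℝ) (r : ℂ) :
    (‖(s : ℂ) - r‖ₑ⁻¹) ^ θ ≤ (‖s - r.re‖ₑ⁻¹) ^ θ := by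
  refine ENNReal.rpow_le_rpow (ENNReal.inv_le_inv.2 ?_) hθ0
  rw [← ofReal_norm, ← ofReal_norm]
  refine ENNReal.ofReal_le_ofReal ?_
  have := Complex.abs_re_le_norm ((s : ℂ) - r)
  simpa using this

lemma roots_integral_bound (θ : ℝ) (hθ0 : 0 ≤ θ) (hθ : θ < 1) (k : ℕ) :
    ∃ K : ℝ≥0∞, K < ⊤ ∧ ∀ r : Fin k → ℂ,
      ∫⁻ s in Set.Icc (0 : ℝ) 1, (1 + ∑ i, (‖(s : ℂ) - r i‖ₑ⁻¹) ^ θ) ≤ K := by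
  obtain ⟨K, hK, h⟩ := one_dim_bound θ hθ0 hθ
  refine ⟨1 + ∑ i : Fin k, K, by simp [ENNReal.mul_lt_top, hK], fun r => ?_⟩
  rw [lintegral_add_left measurable_const, lintegral_finsetSum]
  · refine add_le_add (by simp) (Finset.sum_le_sum fun i _ => ?_)
    exact (lintegral_mono fun s => root_bound θ hθ0 s (r i)).trans (h _)
  · intro i _
    fun_prop

lemma line_one (e : ℕ) (γ : ℝ) (hγ : 0 ≤ γ) (h1 : e * γ < 1) (c : ℝ) (hc : c ≠ 0) :
    ∃ K : ℝ≥0∞, K < ⊤ ∧ ∀ p : ℝ[X], p.natDegree = e → p.leadingCoeff = c →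
      ∫⁻ s in Set.Icc (0 : ℝ) 1, (‖p.eval s‖ₑ⁻¹) ^ γ ≤ K := by
  obtain ⟨K, hK, h⟩ := roots_integral_bound (e * γ) (by positivity) h1 e
  have hcK : (‖c‖ₑ⁻¹) ^ γ < ⊤ := ENNReal.rpow_lt_top_of_nonneg hγ (by simpa using hc)
  refine ⟨(‖c‖ₑ⁻¹) ^ γ * K, ENNReal.mul_lt_top hcK hK, fun p hp hpc => ?_⟩
  obtain ⟨r, hr, -⟩ := real_factor p e hp
  refine le_trans ?_ (mul_le_mul_right (h r) _)
  rw [← lintegral_const_mul' _ _ hcK.ne]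
  refine lintegral_mono fun s => ?_
  have hn := real_factor_norm p e r hr s
  rw [hpc] at hn
  rcases Nat.eq_zero_or_pos e with h0 | h0
  · subst h0
    have : ‖p.eval s‖ₑ = ‖c‖ₑ := by
      rw [← ofReal_norm, ← ofReal_norm, Real.norm_eq_abs, Real.norm_eq_abs, hn]; simp
    simp [this]
  have hne : Nonempty (Fin e) := ⟨⟨0, h0⟩⟩
  obtain ⟨i₀, hi₀⟩ := Finite.exists_min (fun i => ‖(s : ℂ) - r i‖)
  have h2 : |c| * ‖(s : ℂ) - r i₀‖ ^ e ≤ |p.eval s| := by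
    rw [hn]
    refine mul_le_mul_of_nonneg_left ?_ (abs_nonneg _)
    have := Finset.prod_le_prod (s := Finset.univ) (fun (i : Fin e) _ => norm_nonneg ((s : ℂ) - r i₀))
      (fun i _ => hi₀ i)
    simpa using this
  have h3 : ‖c‖ₑ * ‖(s : ℂ) - r i₀‖ₑ ^ e ≤ ‖p.eval s‖ₑ := by
    rw [← ofReal_norm, ← ofReal_norm, ← ofReal_norm, ← ENNReal.ofReal_pow (norm_nonneg _),
      ← ENNReal.ofReal_mul (norm_nonneg _)]
    exact ENNReal.ofReal_le_ofReal h2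
  have h4 : ‖p.eval s‖ₑ⁻¹ ≤ ‖c‖ₑ⁻¹ * (‖(s : ℂ) - r i₀‖ₑ⁻¹) ^ e := by
    rw [← ENNReal.inv_pow, ← ENNReal.mul_inv (Or.inr (by finiteness)) (Or.inl (by finiteness))]
    exact ENNReal.inv_le_inv.2 h3
  have h5 := ENNReal.rpow_le_rpow h4 hγ
  rw [ENNReal.mul_rpow_of_nonneg _ _ hγ, ← ENNReal.rpow_natCast, ← ENNReal.rpow_mul] at h5
  refine h5.trans ?_
  gcongr
  refine le_add_left ?_
  exact Finset.single_le_sum (f := fun i => (‖(s : ℂ) - r i‖ₑ⁻¹) ^ ((e : ℝ) * γ))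
    (fun i _ => zero_le) (Finset.mem_univ i₀)

lemma line_two (k : ℕ) (hk : 2 ≤ k) (β : ℝ) (hβ0 : 0 ≤ β) (hβ : β < 1) (c : ℝ) :
    ∃ K : ℝ≥0∞, K < ⊤ ∧ ∀ p : ℝ[X], p.natDegree = k → p.leadingCoeff = c → c ≠ 0 →
      ∫⁻ s in Set.Icc (0 : ℝ) 1, (‖p.eval s‖ₑ⁻¹) ^ (2 * β / k) ≤
        (‖resultant p (derivative p) k (k - 1)‖ₑ⁻¹) ^ (β / ((k * (k - 1) : ℕ) : ℝ)) * K := by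
  obtain ⟨K, hK, h⟩ := roots_integral_bound β hβ0 hβ k
  have hk0 : 0 < k * (k - 1) := Nat.mul_pos (by omega) (by omega)
  set N := k * (k - 1) with hN
  have hNR : (0 : ℝ) < (N : ℝ) := by exact_mod_cast hk0
  set γ := β / (N : ℝ) with hγd
  have hγ : 0 ≤ γ := by positivity
  set A : ℝ := |c| * 2 ^ N with hA
  set A' := ENNReal.ofReal A with hA'
  have hAK : A' ^ γ < ⊤ := ENNReal.rpow_lt_top_of_nonneg hγ ENNReal.ofReal_ne_top
  refine ⟨A' ^ γ * K, ENNReal.mul_lt_top hAK hK, fun p hp hpc hc => ?_⟩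
  have hApos : 0 < A := by positivity
  have hA0 : A' ≠ 0 := by simpa [hA'] using hApos
  obtain ⟨r, hr, hr2⟩ := real_factor p k hp
  set D := resultant p (derivative p) k (k - 1)
  have hpt : ∀ s : ℝ, (‖p.eval s‖ₑ⁻¹) ^ (2 * β / k) ≤
      (‖D‖ₑ⁻¹) ^ γ * (A' ^ γ * (1 + ∑ i, (‖(s : ℂ) - r i‖ₑ⁻¹) ^ β)) := by
    intro s
    obtain ⟨i, hi⟩ := pointwise_ineq p k (by omega) hp r hr hr2 s
    rw [hpc] at hi
    have h3 : ‖D‖ₑ * ‖(s : ℂ) - r i‖ₑ ^ N ≤ A' * ‖p.eval s‖ₑ ^ (2 * (k - 1)) := by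
      rw [← ofReal_norm, ← ofReal_norm, ← ofReal_norm, ← ENNReal.ofReal_pow (norm_nonneg _),
        ← ENNReal.ofReal_pow (norm_nonneg _),
        ← ENNReal.ofReal_mul (norm_nonneg _), hA', ← ENNReal.ofReal_mul hApos.le]
      exact ENNReal.ofReal_le_ofReal hi
    have h4 : (‖p.eval s‖ₑ⁻¹) ^ (2 * (k - 1)) ≤ A' * (‖D‖ₑ⁻¹ * (‖(s : ℂ) - r i‖ₑ⁻¹) ^ N) := by
      have h5 := ENNReal.inv_le_inv.2 h3
      rw [ENNReal.mul_inv (Or.inl hA0) (Or.inl ENNReal.ofReal_ne_top),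
        ENNReal.mul_inv (Or.inr (by finiteness)) (Or.inl (by finiteness))] at h5
      rw [← ENNReal.inv_pow, ← ENNReal.inv_pow]
      calc (‖p.eval s‖ₑ ^ (2 * (k - 1)))⁻¹ = A' * (A'⁻¹ * (‖p.eval s‖ₑ ^ (2 * (k - 1)))⁻¹) := by
            rw [← mul_assoc, ENNReal.mul_inv_cancel hA0 ENNReal.ofReal_ne_top, one_mul]
        _ ≤ _ := by gcongr
    have h5 := ENNReal.rpow_le_rpow h4 hγ
    rw [ENNReal.mul_rpow_of_nonneg _ _ hγ, ENNReal.mul_rpow_of_nonneg _ _ hγ,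
      ← ENNReal.rpow_natCast, ← ENNReal.rpow_natCast, ← ENNReal.rpow_mul, ← ENNReal.rpow_mul] at h5
    have e1 : ((2 * (k - 1) : ℕ) : ℝ) * γ = 2 * β / k := by
      have hk1 : ((k - 1 : ℕ) : ℝ) ≠ 0 := by
        have : k - 1 ≠ 0 := by omega
        exact_mod_cast this
      have hk2 : (k : ℝ) ≠ 0 := by
        have : k ≠ 0 := by omega
        exact_mod_cast this
      rw [hγd, hN, Nat.cast_mul, Nat.cast_mul]
      field_simp
      push_cast
      ring
    have e2 : (N : ℝ) * γ = β := by rw [hγd]; field_simp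
    rw [e1, e2] at h5
    refine h5.trans ?_
    rw [mul_left_comm]
    gcongr
    refine le_add_left ?_
    exact Finset.single_le_sum (f := fun i => (‖(s : ℂ) - r i‖ₑ⁻¹) ^ β)
      (fun i _ => zero_le) (Finset.mem_univ i)
  by_cases hD : (‖D‖ₑ⁻¹) ^ γ = ⊤
  · rw [hD]
    by_cases hK0 : A' ^ γ * K = 0
    · have hK1 : K ≠ 0 := by
        intro h0
        have := h r
        rw [h0] at this
        have h1 : (1 : ℝ≥0∞) ≤ 0 := by
          refine le_trans ?_ this
          calc (1 : ℝ≥0∞) = ∫⁻ s in Set.Icc (0 : ℝ) 1, 1 := by simp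
            _ ≤ _ := lintegral_mono fun s => le_self_add
        simp at h1
      have := (mul_eq_zero.1 hK0).resolve_right hK1
      have h2 := (ENNReal.rpow_pos (pos_iff_ne_zero.2 hA0) ENNReal.ofReal_ne_top : 0 < A' ^ γ)
      exact absurd this h2.ne'
    · rw [ENNReal.top_mul hK0]; exact le_top
  calc _ ≤ ∫⁻ s in Set.Icc (0 : ℝ) 1,
        (‖D‖ₑ⁻¹) ^ γ * (A' ^ γ * (1 + ∑ i, (‖(s : ℂ) - r i‖ₑ⁻¹) ^ β)) := lintegral_mono hpt
    _ = (‖D‖ₑ⁻¹) ^ γ * (A' ^ γ * ∫⁻ s in Set.Icc (0 : ℝ) 1,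
        (1 + ∑ i, (‖(s : ℂ) - r i‖ₑ⁻¹) ^ β)) := by
      rw [lintegral_const_mul' _ _ hD, lintegral_const_mul' _ _ hAK.ne]
    _ ≤ _ := by gcongr; exact h r

end OneDim

section Final
open scoped ENNReal
open Polynomial

lemma avg {n : ℕ} (f : EuclideanSpace ℝ (Fin n) → ℝ≥0∞) (hf : Measurable f)
    (v : EuclideanSpace ℝ (Fin n)) (R : ℝ) :
    ∫⁻ x in ball (0 : EuclideanSpace ℝ (Fin n)) R, f x ≤
      ∫⁻ z in ball (0 : EuclideanSpace ℝ (Fin n)) (R + ‖v‖),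
        ∫⁻ s in Set.Icc (0 : ℝ) 1, f (z + s • v) := by
  rw [lintegral_lintegral_swap (by fun_prop)]
  calc ∫⁻ x in ball (0 : EuclideanSpace ℝ (Fin n)) R, f x
      = ∫⁻ s in Set.Icc (0 : ℝ) 1, ∫⁻ x in ball (0 : EuclideanSpace ℝ (Fin n)) R, f x := by
        simp
    _ ≤ _ := by
      refine setLIntegral_mono' measurableSet_Icc fun s hs => ?_
      rw [← lintegral_indicator measurableSet_ball, ← lintegral_indicator measurableSet_ball,
        ← lintegral_add_right_eq_self _ (s • v)]
      refine lintegral_mono fun z => ?_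
      by_cases h : z + s • v ∈ ball (0 : EuclideanSpace ℝ (Fin n)) R
      · have h2 : z ∈ ball (0 : EuclideanSpace ℝ (Fin n)) (R + ‖v‖) := by
          rw [mem_ball_zero_iff] at h ⊢
          have h3 : ‖s • v‖ ≤ ‖v‖ := by
            rw [norm_smul, Real.norm_eq_abs, abs_of_nonneg hs.1]
            exact mul_le_of_le_one_left (norm_nonneg _) hs.2
          have h4 := norm_sub_le (z + s • v) (s • v)
          rw [add_sub_cancel_right] at h4
          linarith
        rw [Set.indicator_of_mem h, Set.indicator_of_mem h2]
      · rw [Set.indicator_of_notMem h]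
        exact zero_le

lemma polyFun_continuous {n : ℕ} (P : MvPolynomial (Fin n) ℝ) : Continuous (polyFun P) := by
  unfold polyFun
  exact (MvPolynomial.continuous_eval P).comp (by fun_prop)

lemma weight_measurable {n : ℕ} (P : MvPolynomial (Fin n) ℝ) (γ : ℝ) :
    Measurable (fun x => (‖polyFun P x‖ₑ⁻¹) ^ γ) := by
  have := (polyFun_continuous P).measurable
  fun_prop

lemma line_poly {n : ℕ} (v z : Fin n → ℝ) (P : MvPolynomial (Fin n) ℝ) (c : ℝ) (hc : c ≠ 0)
    (h : (lineHom v P).coeff P.totalDegree = MvPolynomial.C c) :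
    ((lineHom v P).map (MvPolynomial.eval z)).natDegree = P.totalDegree ∧
    ((lineHom v P).map (MvPolynomial.eval z)).leadingCoeff = c := by
  have h1 : ((lineHom v P).map (MvPolynomial.eval z)).coeff P.totalDegree = c := by
    rw [coeff_map, h, MvPolynomial.eval_C]
  have h2 : ((lineHom v P).map (MvPolynomial.eval z)).natDegree = P.totalDegree := by
    apply natDegree_eq_of_le_of_coeff_ne_zero
    · rw [← lineHom_natDegree v P c hc h]
      exact natDegree_map_le
    · rw [h1]; exact hc
  exact ⟨h2, by rw [leadingCoeff, h2, h1]⟩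

lemma polyFun_line {n : ℕ} (v : Fin n → ℝ) (P : MvPolynomial (Fin n) ℝ)
    (z : EuclideanSpace ℝ (Fin n)) (s : ℝ) :
    polyFun P (z + s • (WithLp.toLp 2 v : EuclideanSpace ℝ (Fin n))) =
      ((lineHom v P).map (MvPolynomial.eval (fun i => z i))).eval s := by
  rw [lineHom_eval]
  simp [polyFun]

lemma general_bound {n : ℕ} (D : MvPolynomial (Fin n) ℝ) (hD : D ≠ 0) (γ : ℝ) (hγ : 0 ≤ γ)
    (h1 : D.totalDegree * γ < 1) (R : ℝ) :
    ∫⁻ x in ball (0 : EuclideanSpace ℝ (Fin n)) R, (‖polyFun D x‖ₑ⁻¹) ^ γ < ⊤ := by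
  obtain ⟨v, c, hc, h⟩ := exists_direction D (top_ne_zero D hD)
  obtain ⟨K, hK, hK2⟩ := line_one D.totalDegree γ hγ h1 c hc
  refine (avg _ (weight_measurable D γ) (WithLp.toLp 2 v) R).trans_lt ?_
  refine lt_of_le_of_lt (lintegral_mono (g := fun _ => K) fun z => ?_) ?_
  · simp only [polyFun_line]
    obtain ⟨h2, h3⟩ := line_poly v (fun i => z i) D c hc h
    exact hK2 _ h2 h3
  · rw [lintegral_const, Measure.restrict_apply_univ]
    exact ENNReal.mul_lt_top hK measure_ball_lt_top

lemma harmonic_bound {n : ℕ} (P : MvPolynomial (Fin n) ℝ) (hP0 : P ≠ 0) (hP : IsHarmonicPoly P)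
    (hk : 2 ≤ P.totalDegree) (β : ℝ) (hβ0 : 0 ≤ β) (hβ : β < 1) (R : ℝ) :
    ∫⁻ x in ball (0 : EuclideanSpace ℝ (Fin n)) R,
      (‖polyFun P x‖ₑ⁻¹) ^ (2 * β / P.totalDegree) < ⊤ := by
  obtain ⟨v, c, hc, h⟩ := exists_direction P (top_ne_zero P hP0)
  obtain ⟨K, hK, hK2⟩ := line_two P.totalDegree hk β hβ0 hβ c
  have hnd := lineHom_natDegree v P c hc h
  set k := P.totalDegree with hkd
  set F := lineHom v P with hF
  set D := resultant F (derivative F) k (k - 1) with hDdef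
  have hD : D ≠ 0 := by
    have := resultant_ne F c hc (by rw [leadingCoeff, hnd, h])
      (lineHom_squarefree v hP0 (harmonic_squarefree hP hP0))
    rwa [hnd] at this
  have hdeg : D.totalDegree ≤ k * (k - 1) :=
    resultant_degree _ _ _ _ (WD_lineHom v P) (WD_derivative (WD_lineHom v P))
  have hk0 : 0 < k * (k - 1) := Nat.mul_pos (by omega) (by omega)
  set N := k * (k - 1) with hN
  have hNR : (0 : ℝ) < (N : ℝ) := by exact_mod_cast hk0
  have hγ : 0 ≤ β / (N : ℝ) := by positivity
  have hgen := general_bound D hD (β / (N : ℝ)) hγ (by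
    have h1 : (D.totalDegree : ℝ) ≤ N := by exact_mod_cast hdeg
    calc (D.totalDegree : ℝ) * (β / N) ≤ N * (β / N) := by gcongr
      _ = β := by field_simp
      _ < 1 := hβ) (R + ‖(WithLp.toLp 2 v : EuclideanSpace ℝ (Fin n))‖)
  refine (avg _ (weight_measurable P _) (WithLp.toLp 2 v) R).trans_lt ?_
  refine lt_of_le_of_lt (lintegral_mono
    (g := fun z => (‖polyFun D z‖ₑ⁻¹) ^ (β / (N : ℝ)) * K) fun z => ?_) ?_
  · simp only [polyFun_line]
    obtain ⟨h2, h3⟩ := line_poly v (fun i => z i) P c hc h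
    have h4 := hK2 _ h2 h3 hc
    rw [derivative_map, resultant_map_map] at h4
    exact h4
  · rw [lintegral_mul_const' _ _ hK.ne]
    exact ENNReal.mul_lt_top hgen hK

end Final

/-- **Integrability of the weight** (Lemma 3.1(i)): for a nonzero harmonic polynomial `P`
of degree `k ≥ 1` on ℝⁿ (`n ≥ 2`) and every `a > -min(1, 2/k)`, the function `|P|^a` is
integrable on the unit ball. -/
theorem harmonic_polynomial_weight_integrable (n : ℕ) (hn : 2 ≤ n)
    (P : MvPolynomial (Fin n) ℝ) (hP0 : P ≠ 0) (hP : IsHarmonicPoly P)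
    (k : ℕ) (hk : 1 ≤ k) (hdeg : P.totalDegree = k)
    (a : ℝ) (ha : -min 1 (2 / (k : ℝ)) < a) :
    IntegrableOn (fun x => |polyFun P x| ^ a)
      (ball (0 : EuclideanSpace ℝ (Fin n)) 1) := by
  have hcont := polyFun_continuous P
  rcases le_or_gt 0 a with h0 | h0
  · have hc : Continuous (fun x => |polyFun P x| ^ a) :=
      (Real.continuous_rpow_const h0).comp hcont.abs
    exact (hc.continuousOn.integrableOn_compact (isCompact_closedBall 0 1)).mono_set
      ball_subset_closedBall
  · have hfin : ∫⁻ x in ball (0 : EuclideanSpace ℝ (Fin n)) 1, (‖polyFun P x‖ₑ⁻¹) ^ (-a) < ⊤ := by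
      rcases Nat.lt_or_ge k 2 with h2 | h2
      · have hk1 : k = 1 := by omega
        refine general_bound P hP0 (-a) (by linarith) ?_ 1
        rw [hdeg, hk1]
        have := min_le_left (1 : ℝ) (2 / (k : ℝ))
        push_cast
        linarith
      · have hkR : (0 : ℝ) < k := by exact_mod_cast hk
        have hb := harmonic_bound P hP0 hP (by omega) (-a * k / 2)
          (by have := neg_pos.2 h0; positivity) (by
            have h3 : -a < 2 / (k : ℝ) := by
              have := min_le_right (1 : ℝ) (2 / (k : ℝ))
              linarith
            rw [lt_div_iff₀ hkR] at h3
            linarith) 1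
        have e : 2 * (-a * k / 2) / (P.totalDegree : ℝ) = -a := by
          rw [hdeg]; field_simp
        rwa [e] at hb
    refine ⟨?_, ?_⟩
    · have := hcont.measurable
      exact Measurable.aestronglyMeasurable (by fun_prop)
    · rw [hasFiniteIntegral_iff_enorm]
      refine lt_of_le_of_lt (lintegral_mono fun x => ?_) hfin
      rcases eq_or_ne (polyFun P x) 0 with hx | hx
      · rw [hx]
        simp [ENNReal.top_rpow_of_pos (neg_pos.2 h0)]
      · have h3 : 0 < |polyFun P x| := abs_pos.2 hx
        refine le_of_eq ?_
        rw [← ofReal_norm, ← ofReal_norm, Real.norm_eq_abs, Real.norm_eq_abs,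
          abs_of_nonneg (Real.rpow_nonneg h3.le _), ← ENNReal.ofReal_inv_of_pos h3,
          ENNReal.ofReal_rpow_of_pos (inv_pos.2 h3), Real.inv_rpow h3.le, Real.rpow_neg h3.le,
          inv_inv]
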